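/- Let (F,W,A,r) be a capacity-balanced many-to-one assignment market with a dominant diagonal optimal matching μ. Then the τ-value of the associated game v_γ is a core allocation and equals the average of the firm-optimal and worker-optimal core allocations: τ(v_γ) = (x^f/2 ; y^w/2), where x^f_i=Σ_{j∈μ(i)} a_{ij} for i∈F and y^w_j=a_{j^μ j} for j∈W. -/

import Mathlib

set_option linter.unusedSectionVars false
set_option linter.unusedVariables false

open Finset
open scoped Classical

noncomputable section

variable {F W : Type*} [Fintype F] [Fintype W]

/-- `μ` is a matching between the firm coalition `S` and the worker coalition `T`:
each firm `i ∈ S` appears in at most `r i` pairs and each worker in `T` in at most one pair. -/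
def IsMatching (r : F → ℕ) (S : Finset F) (T : Finset W) (μ : Finset (F × W)) : Prop :=
  (∀ p ∈ μ, p.1 ∈ S ∧ p.2 ∈ T) ∧
  (∀ i : F, (μ.filter fun p => p.1 = i).card ≤ r i) ∧
  (∀ j : W, (μ.filter fun p => p.2 = j).card ≤ 1)

/-- total value of a matching -/
def matchValue (A : F → W → ℝ) (μ : Finset (F × W)) : ℝ := ∑ p ∈ μ, A p.1 p.2

lemma empty_isMatching (r : F → ℕ) (S : Finset F) (T : Finset W) :
    IsMatching r S T (∅ : Finset (F × W)) := by
  refine ⟨by simp, ?_, ?_⟩ <;> intro _ <;> simp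

/-- worth of the coalition formed by firms `S` and workers `T`. -/
def vGamma (A : F → W → ℝ) (r : F → ℕ) (S : Finset F) (T : Finset W) : ℝ :=
  ((S ×ˢ T).powerset.filter fun μ => IsMatching r S T μ).sup'
    ⟨∅, Finset.mem_filter.mpr ⟨Finset.mem_powerset.mpr (Finset.empty_subset _),
        empty_isMatching r S T⟩⟩ (matchValue A)

/-- firms belonging to a coalition of `F ⊕ W` -/
def firmPart (C : Finset (F ⊕ W)) : Finset F := univ.filter (fun i => Sum.inl i ∈ C)

/-- workers belonging to a coalition of `F ⊕ W` -/
def workerPart (C : Finset (F ⊕ W)) : Finset W := univ.filter (fun j => Sum.inr j ∈ C)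

/-- the coalitional function of the many-to-one assignment game -/
def gameValue (A : F → W → ℝ) (r : F → ℕ) (C : Finset (F ⊕ W)) : ℝ :=
  vGamma A r (firmPart C) (workerPart C)

/-- core membership -/
def inCore {N : Type*} [Fintype N] (v : Finset N → ℝ) (z : N → ℝ) : Prop :=
  (∑ k, z k) = v univ ∧ ∀ C : Finset N, v C ≤ ∑ k ∈ C, z k

/-- optimal matching of the grand coalition -/
def IsOptimalMatching (A : F → W → ℝ) (r : F → ℕ) (μ : Finset (F × W)) : Prop :=
  IsMatching r univ univ μ ∧
  ∀ μ' : Finset (F × W), IsMatching r univ univ μ' → matchValue A μ' ≤ matchValue A μ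

/-- workers assigned to firm `i` under the assignment function `m` -/
def assignedTo (m : W → F) (i : F) : Finset W := univ.filter fun j => m j = i

/-- the matching associated with an assignment function (every worker matched) -/
def matchingOfFn (m : W → F) : Finset (F × W) := univ.image fun j => (m j, j)

/-- `m : W → F` represents an optimal matching of a capacity-balanced market that assigns
exactly `r i` workers to each firm `i` and leaves no worker unmatched. -/
def IsBalancedOptimal (A : F → W → ℝ) (r : F → ℕ) (m : W → F) : Prop :=
  (∀ i : F, (assignedTo m i).card = r i) ∧
  IsOptimalMatching A r (matchingOfFn m)

/-- the projection of the core to the workers' payoffs -/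
def CW (A : F → W → ℝ) (m : W → F) : Set (W → ℝ) :=
  { y | (∀ j : W, 0 ≤ y j ∧ y j ≤ A (m j) j) ∧
        ∀ j k : W, m j ≠ m k → A (m j) k - A (m j) j ≤ y k - y j }

/-- excess of a coalition at a payoff vector -/
def excess {N : Type*} (v : Finset N → ℝ) (z : N → ℝ) (S : Finset N) : ℝ :=
  v S - ∑ k ∈ S, z k

/-- maximum surplus `s_ij(z)` of `i` against `j` at `z` -/
def maxSurplus {N : Type*} (v : Finset N → ℝ) (z : N → ℝ) (i j : N) : ℝ :=
  sSup { e | ∃ S : Finset N, i ∈ S ∧ j ∉ S ∧ e = excess v z S }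

def isImputation {N : Type*} [Fintype N] (v : Finset N → ℝ) (z : N → ℝ) : Prop :=
  (∑ k, z k) = v univ ∧ ∀ k : N, v {k} ≤ z k

def inKernel {N : Type*} [Fintype N] (v : Finset N → ℝ) (z : N → ℝ) : Prop :=
  isImputation v z ∧ ∀ i j : N, i ≠ j → maxSurplus v z i j = maxSurplus v z j i

/-- A coalition is inessential if it admits a nontrivial partition into two coalitions
whose values weakly majorize its own value. -/
def Inessential {N : Type*} (v : Finset N → ℝ) (R : Finset N) : Prop :=
  ∃ S T : Finset N, S.Nonempty ∧ T.Nonempty ∧ Disjoint S T ∧ S ∪ T = R ∧ v R ≤ v S + v T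

def Essential {N : Type*} (v : Finset N → ℝ) (R : Finset N) : Prop :=
  R.Nonempty ∧ ¬ Inessential v R

/-- arcs of the tight digraph on `W ∪ {0}` (node `0` is `none`) -/
def tightArc (A : F → W → ℝ) (m : W → F) (y : W → ℝ) : Option W → Option W → Prop
  | none, none => False
  | none, some k => y k = 0
  | some j, none => y j = A (m j) j
  | some j, some k => m j ≠ m k ∧ y k - y j = A (m j) k - A (m j) j


/-- the utopia payoff of player `k`: his/her marginal contribution to the grand
coalition -/
def utopia {N : Type*} [Fintype N] (v : Finset N → ℝ) (k : N) : ℝ :=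
  v univ - v (univ.erase k)

/-- the minimal right of player `k` -/
def minRight {N : Type*} [Fintype N] (v : Finset N → ℝ) (k : N) : ℝ :=
  (univ.powerset.filter fun S : Finset N => k ∈ S).sup'
    ⟨{k}, Finset.mem_filter.mpr ⟨Finset.mem_powerset.mpr (Finset.subset_univ _),
      Finset.mem_singleton_self k⟩⟩
    (fun S => v S - ∑ l ∈ S.erase k, utopia v l)

lemma aux_utopia {N : Type*} [Fintype N] [inst : DecidableEq N] (v : Finset N → ℝ) (k : N) :
    utopia v k = v univ - v (univ.erase k) := by
  unfold utopia
  congr!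

lemma aux_minRight_le {N : Type*} [Fintype N] (v : Finset N → ℝ) (k : N) (c : ℝ)
    (h : ∀ C : Finset N, k ∈ C → v C - (∑ l ∈ C, utopia v l - utopia v k) ≤ c) :
    minRight v k ≤ c := by
  unfold minRight
  apply Finset.sup'_le
  intro C hC
  have hk : k ∈ C := (Finset.mem_filter.mp hC).2
  have s := Finset.sum_erase_add C (utopia v) hk
  have := h C hk
  linarith

lemma aux_le_minRight {N : Type*} [Fintype N] (v : Finset N → ℝ) (k : N) :
    v {k} ≤ minRight v k := by
  unfold minRight
  refine le_trans ?_ (Finset.le_sup' (b := {k}) _ ?_)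
  · simp
  · simp

lemma aux_firm (A : F → W → ℝ) (r : F → ℕ) (m : W → F)
    (hdd1 : ∀ (i : F) (T : Finset W), T.card ≤ r i →
        ∑ j ∈ T, A i j ≤ ∑ j ∈ assignedTo m i, A i j) (S : Finset F) (T : Finset W) :
    vGamma A r S T ≤ ∑ i ∈ S, ∑ j ∈ assignedTo m i, A i j := by
  unfold vGamma
  apply Finset.sup'_le
  intro μ hμ
  obtain ⟨h1, h2, h3⟩ := (Finset.mem_filter.mp hμ).2
  unfold matchValue
  rw [← Finset.sum_fiberwise_of_maps_to (s := μ) (t := S) (g := Prod.fst)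
    (fun p hp => (h1 p hp).1)]
  apply Finset.sum_le_sum
  intro i hi
  have hinj : Set.InjOn Prod.snd ((μ.filter fun p => p.1 = i : Finset (F × W)) : Set (F × W)) := by
    intro p hp q hq h
    simp at hp hq
    exact Prod.ext (hp.2.trans hq.2.symm) h
  have := hdd1 i ((μ.filter fun p => p.1 = i).image Prod.snd)
    (Finset.card_image_le.trans (h2 i))
  rw [Finset.sum_image hinj] at this
  refine le_trans (le_of_eq ?_) this
  apply Finset.sum_congr rfl
  intro p hp
  rw [(Finset.mem_filter.mp hp).2]

lemma aux_worker (A : F → W → ℝ) (r : F → ℕ) (m : W → F) (hA : ∀ i j, 0 ≤ A i j)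
    (hdd2 : ∀ (j : W) (i : F), A i j ≤ A (m j) j) (S : Finset F) (T : Finset W) :
    vGamma A r S T ≤ ∑ j ∈ T, A (m j) j := by
  unfold vGamma
  apply Finset.sup'_le
  intro μ hμ
  obtain ⟨h1, h2, h3⟩ := (Finset.mem_filter.mp hμ).2
  unfold matchValue
  have hinj : Set.InjOn Prod.snd (μ : Set (F × W)) := by
    intro p hp q hq h
    exact Finset.card_le_one.mp (h3 q.2) p (by simp [h]; exact hp) q (by simp; exact hq)
  calc ∑ p ∈ μ, A p.1 p.2 ≤ ∑ p ∈ μ, A (m p.2) p.2 := Finset.sum_le_sum fun p _ => hdd2 _ _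
    _ = ∑ j ∈ μ.image Prod.snd, A (m j) j := (Finset.sum_image (f := fun j => A (m j) j) hinj).symm
    _ ≤ _ := by
      apply Finset.sum_le_sum_of_subset_of_nonneg
      · intro j hj
        obtain ⟨p, hp, rfl⟩ := Finset.mem_image.mp hj
        exact (h1 p hp).2
      · intro j _ _
        exact hA _ _

lemma aux_lower (A : F → W → ℝ) (r : F → ℕ) (m : W → F)
    (hm : ∀ i : F, (assignedTo m i).card = r i) (S : Finset F) (T : Finset W) :
    ∑ j ∈ T.filter (fun j => m j ∈ S), A (m j) j ≤ vGamma A r S T := by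
  have hinj : Function.Injective (fun j => (m j, j)) := fun a b h => (Prod.ext_iff.mp h).2
  have e : ∑ j ∈ T.filter (fun j => m j ∈ S), A (m j) j =
      matchValue A ((T.filter (fun j => m j ∈ S)).image fun j => (m j, j)) := by
    unfold matchValue
    rw [Finset.sum_image hinj.injOn]
  rw [e]
  have hM : IsMatching r S T ((T.filter (fun j => m j ∈ S)).image fun j => (m j, j)) := by
    refine ⟨?_, ?_, ?_⟩
    · intro p hp
      obtain ⟨j, hj, rfl⟩ := Finset.mem_image.mp hp
      have := Finset.mem_filter.mp hj
      exact ⟨this.2, this.1⟩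
    · intro i
      rw [← hm i, ← Finset.card_image_of_injective (assignedTo m i) hinj]
      apply Finset.card_le_card
      intro p hp
      obtain ⟨hp, h⟩ := Finset.mem_filter.mp hp
      obtain ⟨j, hj, rfl⟩ := Finset.mem_image.mp hp
      exact Finset.mem_image_of_mem _ (by simpa [assignedTo] using h)
    · intro j
      rw [Finset.card_le_one]
      intro p hp q hq
      obtain ⟨hp, h⟩ := Finset.mem_filter.mp hp
      obtain ⟨hq, h'⟩ := Finset.mem_filter.mp hq
      obtain ⟨a, _, rfl⟩ := Finset.mem_image.mp hp
      obtain ⟨b, _, rfl⟩ := Finset.mem_image.mp hq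
      simp only at h h'
      rw [h, h']
  unfold vGamma
  apply Finset.le_sup' (matchValue A)
  rw [Finset.mem_filter, Finset.mem_powerset]
  exact ⟨fun p hp => Finset.mem_product.mpr (hM.1 p hp), hM⟩

lemma aux_sum (C : Finset (F ⊕ W)) (f : F → ℝ) (g : W → ℝ) :
    ∑ k ∈ C, Sum.elim f g k = ∑ i ∈ firmPart C, f i + ∑ j ∈ workerPart C, g j := by
  unfold firmPart workerPart
  rw [← Finset.sum_filter_add_sum_filter_not C (fun k => k.isLeft = true)]
  congr 1
  · symm
    apply Finset.sum_bij (fun i _ => Sum.inl i)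
    · intro i hi; simpa using hi
    · intro a _ b _ h; exact Sum.inl.inj h
    · rintro (b | b) hb
      · exact ⟨b, by simpa using hb, rfl⟩
      · simp at hb
    · intros; rfl
  · symm
    apply Finset.sum_bij (fun i _ => Sum.inr i)
    · intro i hi; simpa using hi
    · intro a _ b _ h; exact Sum.inr.inj h
    · rintro (b | b) hb
      · simp at hb
      · exact ⟨b, by simpa using hb, rfl⟩
    · intros; rfl

/-- in a dominant diagonal capacity-balanced market, the τ-value of the
associated game is a core allocation and equals the average of the firm-optimal and the
worker-optimal core allocations, namely `(x^f/2 ; y^w/2)`; being the τ-value means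
lying on the segment between the minimal rights vector and the utopia vector while
being efficient. -/
theorem dominantDiagonal_tauValue (A : F → W → ℝ) (r : F → ℕ)
    (hA : ∀ i j, 0 ≤ A i j) (hbal : ∑ i, r i = Fintype.card W)
    (m : W → F) (hm : IsBalancedOptimal A r m)
    (hdd1 : ∀ (i : F) (T : Finset W), T.card ≤ r i →
        ∑ j ∈ T, A i j ≤ ∑ j ∈ assignedTo m i, A i j)
    (hdd2 : ∀ (j : W) (i : F), A i j ≤ A (m j) j) :
    (∃ κ : ℝ, 0 ≤ κ ∧ κ ≤ 1 ∧
        ∀ k : F ⊕ W,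
          Sum.elim (fun i => (∑ j ∈ assignedTo m i, A i j) / 2)
              (fun j => A (m j) j / 2) k =
            minRight (gameValue A r) k +
              κ * (utopia (gameValue A r) k - minRight (gameValue A r) k)) ∧
    (∑ k : F ⊕ W,
        Sum.elim (fun i => (∑ j ∈ assignedTo m i, A i j) / 2)
          (fun j => A (m j) j / 2) k = gameValue A r univ) ∧
    inCore (gameValue A r)
      (Sum.elim (fun i => (∑ j ∈ assignedTo m i, A i j) / 2)
        (fun j => A (m j) j / 2)) := by
  set x : F → ℝ := fun i => ∑ j ∈ assignedTo m i, A i j with hx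
  set y : W → ℝ := fun j => A (m j) j with hy
  have hx0 : ∀ i, 0 ≤ x i := fun i => Finset.sum_nonneg fun j _ => hA i j
  have hy0 : ∀ j, 0 ≤ y j := fun j => hA _ j
  have hF : ∀ C, gameValue A r C ≤ ∑ i ∈ firmPart C, x i := fun C => aux_firm A r m hdd1 _ _
  have hW : ∀ C, gameValue A r C ≤ ∑ j ∈ workerPart C, y j :=
    fun C => aux_worker A r m hA hdd2 _ _
  have hL : ∀ C, ∑ j ∈ (workerPart C).filter (fun j => m j ∈ firmPart C), y j ≤
      gameValue A r C := fun C => aux_lower A r m hm.1 _ _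
  have hfu : firmPart (univ : Finset (F ⊕ W)) = univ := by simp [firmPart]
  have hwu : workerPart (univ : Finset (F ⊕ W)) = univ := by simp [workerPart]
  have hxi : ∀ i, x i = ∑ j ∈ assignedTo m i, y j := by
    intro i
    apply Finset.sum_congr rfl
    intro j hj
    have : m j = i := by simpa [assignedTo] using hj
    simp [hy, this]
  have hxy : ∑ i, x i = ∑ j, y j := by
    simp_rw [hxi]
    exact Finset.sum_fiberwise univ m y
  have hV : gameValue A r univ = ∑ j, y j := by
    apply le_antisymm
    · simpa [hwu] using hW univ
    · simpa [hwu, hfu] using hL univ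
  have hUF : ∀ i, utopia (gameValue A r) (Sum.inl i) = x i := by
    intro i
    have e1 : firmPart ((univ : Finset (F ⊕ W)).erase (Sum.inl i)) = univ.erase i := by
      ext; simp [firmPart]
    have e2 : workerPart ((univ : Finset (F ⊕ W)).erase (Sum.inl i)) = univ := by
      ext; simp [workerPart]
    have a := hF (univ.erase (Sum.inl i))
    have b := hL (univ.erase (Sum.inl i))
    rw [e1] at a b
    rw [e2] at b
    have c := Finset.sum_erase_add univ x (Finset.mem_univ i)
    have d := Finset.sum_filter_add_sum_filter_not univ (fun j => m j = i) y
    have e3 : (univ.filter fun j => m j ∈ univ.erase i) = univ.filter fun j => ¬ m j = i := by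
      ext; simp
    rw [e3] at b
    have e := hxi i
    unfold assignedTo at e
    rw [aux_utopia]
    linarith
  have hUW : ∀ j, utopia (gameValue A r) (Sum.inr j) = y j := by
    intro j
    have e1 : firmPart ((univ : Finset (F ⊕ W)).erase (Sum.inr j)) = univ := by
      ext; simp [firmPart]
    have e2 : workerPart ((univ : Finset (F ⊕ W)).erase (Sum.inr j)) = univ.erase j := by
      ext; simp [workerPart]
    have a := hW (univ.erase (Sum.inr j))
    have b := hL (univ.erase (Sum.inr j))
    rw [e2] at a b
    rw [e1, Finset.filter_true_of_mem (by simp)] at b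
    have c := Finset.sum_erase_add univ y (Finset.mem_univ j)
    rw [aux_utopia]
    linarith
  have hU : utopia (gameValue A r) = Sum.elim x y := by
    funext k
    cases k with
    | inl i => exact hUF i
    | inr j => exact hUW j
  have hpos : ∀ C, 0 ≤ gameValue A r C :=
    fun C => (Finset.sum_nonneg fun j _ => hy0 j).trans (hL C)
  have hm0 : ∀ k, minRight (gameValue A r) k = 0 := by
    intro k
    apply le_antisymm
    · apply aux_minRight_le
      intro C hk
      rw [hU, aux_sum]
      cases k with
      | inl i =>
        have t := Finset.single_le_sum (f := x) (fun i _ => hx0 i)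
          (show i ∈ firmPart C by simpa [firmPart] using hk)
        have := hW C
        simp only [Sum.elim_inl]
        linarith
      | inr j =>
        have t := Finset.single_le_sum (f := y) (fun i _ => hy0 i)
          (show j ∈ workerPart C by simpa [workerPart] using hk)
        have := hF C
        simp only [Sum.elim_inr]
        linarith
    · exact (hpos {k}).trans (aux_le_minRight _ k)
  have hsum : ∑ k : F ⊕ W, Sum.elim (fun i => x i / 2) (fun j => y j / 2) k =
      gameValue A r univ := by
    rw [hV, aux_sum, hfu, hwu, ← Finset.sum_div, ← Finset.sum_div, hxy]
    ring
  refine ⟨⟨1 / 2, by norm_num, by norm_num, ?_⟩, hsum, hsum, ?_⟩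
  · intro k
    rw [hm0, hU]
    cases k <;> simp <;> ring
  · intro C
    rw [aux_sum, ← Finset.sum_div, ← Finset.sum_div]
    have := hF C
    have := hW C
    linarith

end
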